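/- There exists an absolute constant K such that for every continuous strictly convex function f : ℝ → ℝ and all finite sets A, C ⊂ ℝ with |A|/2 ≤ |C| ≤ 2|A| and |A| ≥ 2, one has |f(A)+C|^6 · |A−A|^5 ≥ K · |A|^{14} / (log|A|)^2. -/

import Mathlib

open Finset Pointwise

noncomputable def dlt (X Y : Finset ℝ) (s : ℝ) : ℕ :=
  ((X ×ˢ Y).filter (fun p => p.1 - p.2 = s)).card

noncomputable def sg (X Y : Finset ℝ) (s : ℝ) : ℕ :=
  ((X ×ˢ Y).filter (fun p => p.1 + p.2 = s)).card

noncomputable def En (X Y : Finset ℝ) : ℝ :=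
  ∑ s ∈ X - X, (dlt X X s : ℝ) * (dlt Y Y s : ℝ)

noncomputable def E3 (X : Finset ℝ) : ℝ :=
  ∑ s ∈ X - X, (dlt X X s : ℝ) ^ 3

noncomputable def E15 (X : Finset ℝ) : ℝ :=
  ∑ s ∈ X - X, (dlt X X s : ℝ) ^ ((3 : ℝ) / 2)

/-- The number of elements of `X` below `x`. -/
noncomputable def rankIn (X : Finset ℝ) (x : ℝ) : ℕ := #{y ∈ X | y < x}

lemma rankIn_mono (X : Finset ℝ) : Monotone (rankIn X) := fun _ _ hxy =>
  card_le_card (monotone_filter_right _ fun _ _ h => lt_of_lt_of_le h hxy)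

lemma rankIn_lt_card {X : Finset ℝ} {x : ℝ} (hx : x ∈ X) : rankIn X x < #X :=
  card_lt_card (filter_ssubset.2 ⟨x, hx, lt_irrefl x⟩)

lemma rankIn_strictMonoOn (X : Finset ℝ) : StrictMonoOn (rankIn X) X := fun x hx _ _ hxy =>
  card_lt_card <| (ssubset_iff_of_subset
    (monotone_filter_right _ fun _ _ h => lt_trans h hxy)).2
      ⟨x, mem_filter.2 ⟨hx, hxy⟩, by simp⟩

/-- The increasing pairs in `X` that lie in a common block, when `X` is cut into consecutive
blocks of `k` elements. -/
noncomputable def blockPairs (X : Finset ℝ) (k : ℕ) : Finset (ℝ × ℝ) :=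
  {p ∈ X ×ˢ X | p.1 < p.2 ∧ rankIn X p.1 / k = rankIn X p.2 / k}

lemma card_blockPairs_le (X : Finset ℝ) {k : ℕ} (hk : 0 < k) : #(blockPairs X k) ≤ #X * k := by
  rw [← card_range k, ← card_product, card_range]
  refine card_le_card_of_injOn (fun p => (p.1, rankIn X p.2 % k)) ?_ ?_
  · intro p hp
    simp only [blockPairs, coe_filter, Set.mem_ofPred_eq, mem_product] at hp
    simpa using ⟨hp.1.1, Nat.mod_lt _ hk⟩
  · intro p hp q hq h
    simp only [blockPairs, coe_filter, Set.mem_ofPred_eq, mem_product] at hp hq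
    simp only [Prod.mk.injEq] at h
    refine Prod.ext h.1 ((rankIn_strictMonoOn X).injOn hp.1.2 hq.1.2 ?_)
    rw [← Nat.div_add_mod (rankIn X p.2) k, ← Nat.div_add_mod (rankIn X q.2) k, ← hp.2.2,
      ← hq.2.2, h.1, h.2]

lemma card_le_add_card_pairs (Y : Finset ℝ) (φ : ℝ → ℕ) (V : ℕ) (hφ : ∀ y ∈ Y, φ y < V) :
    #Y ≤ V + #{p ∈ Y ×ˢ Y | p.1 < p.2 ∧ φ p.1 = φ p.2} := by
  classical
  rw [← card_filter_add_card_filter_not (fun y => ∀ x ∈ Y, x < y → φ x ≠ φ y)]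
  refine add_le_add ?_ ?_
  · rw [← card_range V]
    refine card_le_card_of_injOn φ (fun y hy => ?_) (fun y hy z hz h => ?_)
    · simpa using hφ y (mem_filter.1 hy).1
    · obtain ⟨hy, hy'⟩ := mem_filter.1 hy
      obtain ⟨hz, hz'⟩ := mem_filter.1 hz
      rcases lt_trichotomy y z with hl | hl | hl
      · exact absurd h (hz' y hy hl)
      · exact hl
      · exact absurd h.symm (hy' z hz hl)
  · refine card_le_card_of_surjOn Prod.snd fun y hy => ?_
    obtain ⟨hy, hy'⟩ := mem_filter.1 hy
    push Not at hy'
    obtain ⟨x, hx, hxy, h⟩ := hy'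
    exact ⟨(x, y), by simp [hx, hy, hxy, h], rfl⟩

lemma StrictConvexOn.eq_of_increment_eq {f : ℝ → ℝ} (hf : StrictConvexOn ℝ Set.univ f)
    {a a' e e' : ℝ} (ha : a < a') (h : a' - a = e' - e) (hfe : f a' - f a = f e' - f e) :
    a = e := by
  have key : ∀ {a a' e e' : ℝ}, a < a' → a' - a = e' - e → a < e → f a' - f a < f e' - f e := by
    intro a a' e e' ha h hae
    have h1 := hf.secant_strict_mono (a := a) (x := a') (y := e') trivial trivial trivial
      (by linarith) (by linarith) (by linarith)
    have h2 := hf.secant_strict_mono (a := e') (x := a) (y := e) trivial trivial trivial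
      (by linarith) (by linarith) (by linarith)
    rw [← neg_div_neg_eq, ← neg_div_neg_eq (f e - f e')] at h2
    simp only [neg_sub] at h2
    have h3 := h1.trans h2
    rw [h, div_lt_div_iff_of_pos_right (by linarith)] at h3
    exact h3
  rcases lt_trichotomy a e with hl | hl | hl
  · exact absurd hfe (key ha h hl).ne
  · exact hl
  · exact absurd hfe (key (by linarith) h.symm hl).ne'

lemma dlt_le_card_left (X Y : Finset ℝ) (s : ℝ) : dlt X Y s ≤ #{x ∈ X | x - s ∈ Y} := by
  refine card_le_card_of_injOn Prod.fst (fun p hp => ?_) (fun p hp q hq h => ?_)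
  · simp only [coe_filter, Set.mem_ofPred_eq, mem_product] at hp ⊢
    exact ⟨hp.1.1, by rw [← hp.2]; simpa using hp.1.2⟩
  · simp only [coe_filter, Set.mem_ofPred_eq] at hp hq
    exact Prod.ext h (by linarith [hp.2, hq.2])

lemma dlt_le_card_right (X Y : Finset ℝ) (s : ℝ) : dlt X Y s ≤ #Y := by
  refine card_le_card_of_injOn Prod.snd (fun p hp => ?_) (fun p hp q hq h => ?_)
  · simp only [coe_filter, Set.mem_ofPred_eq, mem_product] at hp ⊢
    exact hp.1.2
  · simp only [coe_filter, Set.mem_ofPred_eq] at hp hq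
    exact Prod.ext (by linarith [hp.2, hq.2]) h

lemma sum_dlt (X Y : Finset ℝ) : ∑ s ∈ X - Y, dlt X Y s = #X * #Y := by
  rw [← card_product]
  exact (card_eq_sum_card_fiberwise fun p hp =>
    sub_mem_sub (mem_product.1 hp).1 (mem_product.1 hp).2).symm

/-- An incidence bound of Szemerédi–Trotter type: few `s` have many representations `a - b`. -/
lemma card_rich_differences_le {f : ℝ → ℝ} (hf : StrictConvexOn ℝ Set.univ f)
    {A B C S T : Finset ℝ} (hmono : StrictMonoOn f A) (hS : ∀ a ∈ A, ∀ c ∈ C, f a + c ∈ S)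
    (hA : #A ≤ #S) (hC : #C ≤ #S) {τ : ℕ} (hT : ∀ s ∈ T, τ ≤ dlt A B s) :
    #T * #C * τ ^ 3 ≤ 75 * #S ^ 2 * #B ^ 2 := by
  rcases T.eq_empty_or_nonempty with rfl | ⟨s₀, hs₀⟩
  · simp
  have hτB : τ ≤ #B := (hT s₀ hs₀).trans (dlt_le_card_right _ _ _)
  have hτS : τ ≤ #S := ((hT s₀ hs₀).trans (dlt_le_card_left _ _ _)).trans
    ((card_filter_le _ _).trans hA)
  rcases Nat.lt_or_ge τ 2 with hτ | hτ
  · interval_cases τ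
    · simp
    · have hTAB : #T ≤ #A * #B := by
        refine (card_le_card fun s hs => ?_).trans (card_sub_le (s := A) (t := B))
        obtain ⟨p, hp⟩ := card_pos.1 (hT s hs)
        obtain ⟨hp, hps⟩ := mem_filter.1 hp
        exact hps ▸ sub_mem_sub (mem_product.1 hp).1 (mem_product.1 hp).2
      calc #T * #C * 1 ^ 3 ≤ #S * #B * #S * 1 ^ 3 := by gcongr; exact hTAB.trans (by gcongr)
        _ ≤ 75 * #S ^ 2 * #B ^ 2 := by nlinarith [Nat.zero_le (#S ^ 2 * #B)]
  have blockSize : ∀ N, τ ≤ N → ∃ k, 0 < k ∧ k * τ ≤ 5 * N ∧ 4 * N ≤ k * τ := by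
    intro N hN
    have h1 := Nat.div_mul_le_self (4 * N) τ
    have h2 := Nat.lt_div_mul_add (a := 4 * N) (b := τ) (by omega)
    refine ⟨4 * N / τ + 1, Nat.succ_pos _, ?_, ?_⟩ <;> rw [add_one_mul] <;> omega
  obtain ⟨k, hk, hkB, hBk⟩ := blockSize #B hτB
  obtain ⟨l, hl, hlS, hSl⟩ := blockSize #S hτS
  have blocks : ∀ {X : Finset ℝ} {x : ℝ} {m : ℕ}, 0 < m → 4 * #X ≤ m * τ → x ∈ X →
      4 * (rankIn X x / m) < τ := by
    intro X x m hm hX hx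
    have h1 := rankIn_lt_card hx
    have h2 := Nat.div_mul_le_self (rankIn X x) m
    by_contra! h
    nlinarith
  let φ : ℝ × ℝ → ℝ → ℕ := fun q a => rankIn B (a - q.1) / k + rankIn S (f a + q.2) / l
  let Y : ℝ → Finset ℝ := fun s => {a ∈ A | a - s ∈ B}
  let Q : ℝ × ℝ → Finset (ℝ × ℝ) := fun q =>
    {p ∈ Y q.1 ×ˢ Y q.1 | p.1 < p.2 ∧ φ q p.1 = φ q p.2}
  have hQ : ∀ q ∈ T ×ˢ C, τ / 2 ≤ #(Q q) := by
    intro q hq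
    have h1 := card_le_add_card_pairs (Y q.1) (φ q) ((τ + 1) / 2) fun a ha => by
      obtain ⟨ha, hab⟩ := mem_filter.1 ha
      have h1 := blocks hk hBk hab
      have h2 := blocks hl hSl (hS a ha q.2 (mem_product.1 hq).2)
      simp only [φ]
      omega
    have h2 := (hT q.1 (mem_product.1 hq).1).trans (dlt_le_card_left _ _ _)
    change τ ≤ #(Y q.1) at h2
    change #(Y q.1) ≤ _ + #(Q q) at h1
    omega
  have hlower : #T * #C * (τ / 2) ≤ #((T ×ˢ C).sigma Q) := by
    rw [card_sigma, ← card_product, ← smul_eq_mul]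
    exact card_nsmul_le_sum _ _ _ hQ
  have hupper : #((T ×ˢ C).sigma Q) ≤ (#B * k) * (#S * l) := by
    refine le_trans ?_ (Nat.mul_le_mul (card_blockPairs_le B hk) (card_blockPairs_le S hl))
    rw [← card_product]
    refine card_le_card_of_injOn (fun x => ((x.2.1 - x.1.1, x.2.2 - x.1.1),
      (f x.2.1 + x.1.2, f x.2.2 + x.1.2))) ?_ ?_
    · rintro ⟨⟨s, c⟩, a, a'⟩ hx
      simp only [coe_sigma, Set.mem_sigma_iff, mem_coe, mem_product, Q, Y, mem_filter] at hx
      obtain ⟨⟨hs, hc⟩, ⟨⟨ha, hab⟩, ha', hab'⟩, haa, hφ⟩ := hx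
      have h1 : rankIn B (a - s) / k ≤ rankIn B (a' - s) / k :=
        Nat.div_le_div_right (rankIn_mono B (by linarith))
      have h2 : rankIn S (f a + c) / l ≤ rankIn S (f a' + c) / l :=
        Nat.div_le_div_right (rankIn_mono S (by linarith [hmono ha ha' haa]))
      simp only [φ] at hφ
      simp only [blockPairs, coe_product, Set.mem_prod, mem_coe, mem_filter, mem_product]
      exact ⟨⟨⟨hab, hab'⟩, by linarith, by omega⟩, ⟨hS a ha c hc, hS a' ha' c hc⟩, by linarith [hmono ha ha' haa], by omega⟩
    · rintro ⟨⟨s, c⟩, a, a'⟩ hx ⟨⟨t, d⟩, e, e'⟩ hy h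
      simp only [coe_sigma, Set.mem_sigma_iff, mem_coe, Q, mem_filter] at hx hy
      simp only [Prod.mk.injEq] at h
      obtain ⟨⟨h1, h2⟩, h3, h4⟩ := h
      obtain rfl : a = e := hf.eq_of_increment_eq (e' := e') hx.2.2.1 (by linarith) (by linarith)
      obtain rfl : s = t := by linarith
      obtain rfl : c = d := by linarith
      obtain rfl : a' = e' := by linarith
      rfl
  have hτ3 : τ ≤ 3 * (τ / 2) := by omega
  calc #T * #C * τ ^ 3 = #T * #C * τ * τ ^ 2 := by ring
    _ ≤ #T * #C * (3 * (τ / 2)) * τ ^ 2 := by gcongr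
    _ = 3 * (#T * #C * (τ / 2)) * τ ^ 2 := by ring
    _ ≤ 3 * ((#B * k) * (#S * l)) * τ ^ 2 := by
      have := hlower.trans hupper
      gcongr 3 * ?_ * τ ^ 2
    _ = 3 * #B * #S * (k * τ) * (l * τ) := by ring
    _ ≤ 3 * #B * #S * (5 * #B) * (5 * #S) := by gcongr
    _ = 75 * #S ^ 2 * #B ^ 2 := by ring

section Moments

variable {T : Finset ℝ} {r : ℝ → ℕ} {M : ℝ}

/-- Bounding `∑ g (r s)` by a layer-cake sum, given a cubic decay of the level sets of `r`. -/
lemma sum_layers_le (hr : ∀ τ : ℕ, 1 ≤ τ → (#{s ∈ T | τ ≤ r s} : ℝ) * (τ : ℝ) ^ 3 ≤ M)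
    (I : Finset ℕ) (hI : ∀ τ ∈ I, 1 ≤ τ) (w : ℕ → ℝ) (hw : ∀ τ ∈ I, 0 ≤ w τ) :
    ∑ s ∈ T, ∑ τ ∈ I with τ ≤ r s, w τ ≤ ∑ τ ∈ I, w τ * (M / (τ : ℝ) ^ 3) := by
  simp only [sum_filter]
  rw [sum_comm]
  refine sum_le_sum fun τ hτ => ?_
  have hpos : (0 : ℝ) < τ := by exact_mod_cast hI τ hτ
  rw [← sum_filter, sum_const, nsmul_eq_mul, mul_comm]
  exact mul_le_mul_of_nonneg_left ((le_div_iff₀ (by positivity)).2 (hr τ (hI τ hτ))) (hw τ hτ)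

lemma sum_cube_le (hr : ∀ τ : ℕ, 1 ≤ τ → (#{s ∈ T | τ ≤ r s} : ℝ) * (τ : ℝ) ^ 3 ≤ M)
    (hM : 0 ≤ M) {n : ℕ} (hn : ∀ s ∈ T, r s ≤ n) :
    ∑ s ∈ T, (r s : ℝ) ^ 3 ≤ 3 * M * (1 + Real.log n) := by
  have hcube : ∀ m : ℕ, (m : ℝ) ^ 3 ≤ ∑ τ ∈ Icc 1 m, 3 * (τ : ℝ) ^ 2 := by
    intro m
    induction m with
    | zero => simp
    | succ m ih =>
      rw [sum_Icc_succ_top (by omega)]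
      push_cast
      nlinarith [(Nat.cast_nonneg m : (0 : ℝ) ≤ m)]
  calc ∑ s ∈ T, (r s : ℝ) ^ 3
      ≤ ∑ s ∈ T, ∑ τ ∈ Icc 1 n with τ ≤ r s, 3 * (τ : ℝ) ^ 2 := by
        refine sum_le_sum fun s hs => (hcube (r s)).trans_eq (sum_congr ?_ fun _ _ => rfl)
        have := hn s hs
        ext τ
        simp only [mem_Icc, mem_filter]
        omega
    _ ≤ ∑ τ ∈ Icc 1 n, 3 * (τ : ℝ) ^ 2 * (M / (τ : ℝ) ^ 3) :=
        sum_layers_le hr _ (fun τ hτ => (mem_Icc.1 hτ).1) _ fun _ _ => by positivity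
    _ = 3 * M * (harmonic n : ℝ) := by
        rw [harmonic_eq_sum_Icc]
        push_cast
        rw [mul_sum]
        refine sum_congr rfl fun τ hτ => ?_
        have : (0 : ℝ) < τ := by exact_mod_cast (mem_Icc.1 hτ).1
        field_simp
    _ ≤ 3 * M * (1 + Real.log n) := by gcongr; exact harmonic_le_one_add_log n

lemma sum_sq_le_add (hr : ∀ τ : ℕ, 1 ≤ τ → (#{s ∈ T | τ ≤ r s} : ℝ) * (τ : ℝ) ^ 3 ≤ M)
    (hM : 0 ≤ M) {d : ℕ} (hd : 1 ≤ d) :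
    ∑ s ∈ T, (r s : ℝ) ^ 2 ≤ d * ∑ s ∈ T, (r s : ℝ) + 2 * M / d := by
  have hsq : ∀ m : ℕ, (m : ℝ) ^ 2 ≤ d * m + ∑ τ ∈ Ioc d m, 2 * (τ : ℝ) := by
    intro m
    rcases le_total m d with h | h
    · rw [Ioc_eq_empty_of_le h, sum_empty, add_zero, sq]
      gcongr
    · induction m, h using Nat.le_induction with
      | base => simp [sq]
      | succ m hm ih =>
        have h : (d : ℝ) ≤ m := by exact_mod_cast hm
        rw [sum_Ioc_succ_top hm]
        push_cast
        nlinarith [(Nat.cast_nonneg d : (0 : ℝ) ≤ d)]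
  set N := max d (T.sup r) with hN
  calc ∑ s ∈ T, (r s : ℝ) ^ 2
      ≤ ∑ s ∈ T, (d * (r s : ℝ) + ∑ τ ∈ Ioc d N with τ ≤ r s, 2 * (τ : ℝ)) := by
        refine sum_le_sum fun s hs => (hsq (r s)).trans_eq ?_
        have : r s ≤ N := (le_sup hs).trans (le_max_right _ _)
        congr 1
        refine sum_congr ?_ fun _ _ => rfl
        ext τ
        simp only [mem_Ioc, mem_filter]
        omega
    _ = d * ∑ s ∈ T, (r s : ℝ) + ∑ s ∈ T, ∑ τ ∈ Ioc d N with τ ≤ r s, 2 * (τ : ℝ) := by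
        rw [sum_add_distrib, mul_sum]
    _ ≤ d * ∑ s ∈ T, (r s : ℝ) + ∑ τ ∈ Ioc d N, 2 * (τ : ℝ) * (M / (τ : ℝ) ^ 3) := by
        gcongr
        exact sum_layers_le hr _ (fun τ hτ => by have := mem_Ioc.1 hτ; omega) _
          fun _ _ => by positivity
    _ = d * ∑ s ∈ T, (r s : ℝ) + 2 * M * ∑ τ ∈ Ioc d N, ((τ : ℝ) ^ 2)⁻¹ := by
        congr 1
        rw [mul_sum]
        refine sum_congr rfl fun τ hτ => ?_
        have : (0 : ℝ) < τ := by exact_mod_cast (Nat.zero_le d).trans_lt (mem_Ioc.1 hτ).1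
        field_simp
    _ ≤ d * ∑ s ∈ T, (r s : ℝ) + 2 * M * (d : ℝ)⁻¹ := by
        gcongr
        refine (sum_Ioc_inv_sq_le_sub (by omega) (le_max_left _ _)).trans ?_
        simp
    _ = _ := by rw [div_eq_mul_inv]

lemma sum_sq_sq_le (hr : ∀ τ : ℕ, 1 ≤ τ → (#{s ∈ T | τ ≤ r s} : ℝ) * (τ : ℝ) ^ 3 ≤ M)
    {R : ℝ} (hR : ∑ s ∈ T, (r s : ℝ) = R) (hRpos : 0 < R) (hRM : R ≤ M) :
    (∑ s ∈ T, (r s : ℝ) ^ 2) ^ 2 ≤ 16 * (M * R) := by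
  have hMpos : 0 < M := hRpos.trans_le hRM
  set x := √(M / R) with hx
  have hx1 : 1 ≤ x := Real.one_le_sqrt.2 ((one_le_div hRpos).2 hRM)
  have hxsq : x ^ 2 * R = M := by
    rw [hx, Real.sq_sqrt (by positivity)]
    field_simp
  have hd : 1 ≤ ⌈x⌉₊ := Nat.one_le_ceil_iff.2 (by positivity)
  have hle : x ≤ ⌈x⌉₊ := Nat.le_ceil x
  have hlt : (⌈x⌉₊ : ℝ) ≤ 2 * x := by linarith [Nat.ceil_lt_add_one (zero_le_one.trans hx1)]
  have key : ∑ s ∈ T, (r s : ℝ) ^ 2 ≤ 4 * (x * R) := by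
    refine (sum_sq_le_add hr hMpos.le hd).trans ?_
    have h1 : 2 * M / (⌈x⌉₊ : ℝ) ≤ 2 * M / x := by gcongr
    have h2 : 2 * M / x = 2 * (x * R) := by
      rw [← hxsq]
      field_simp
    rw [hR]
    nlinarith
  calc (∑ s ∈ T, (r s : ℝ) ^ 2) ^ 2 ≤ (4 * (x * R)) ^ 2 := by gcongr
    _ = 16 * (x ^ 2 * R * R) := by ring
    _ = 16 * (M * R) := by rw [hxsq]

end Moments

lemma sum_addEnergy_le_sum_dlt_cube (A : Finset ℝ) :
    ∑ s ∈ A - A, addEnergy A (-{a ∈ A | a - s ∈ A}) ≤ ∑ x ∈ A - A, dlt A A x ^ 3 := by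
  let P : ℝ → Finset (ℝ × ℝ) := fun x => {p ∈ A ×ˢ A | p.1 - p.2 = x}
  have hP : ∀ x, dlt A A x ^ 3 = #(P x ×ˢ (P x ×ˢ P x)) := fun x => by
    rw [card_product, card_product, pow_three]
    rfl
  simp only [hP, addEnergy_eq_card_filter, ← card_sigma]
  refine card_le_card_of_injOn (fun q => ⟨q.2.1.1 - q.2.2.1, ((q.2.1.1, q.2.2.1),
    ((-q.2.1.2, -q.2.2.2), (-q.2.1.2 - q.1, -q.2.2.2 - q.1)))⟩) ?_ ?_
  · rintro ⟨s, ⟨a, b⟩, a', b'⟩ h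
    simp only [coe_sigma, Set.mem_sigma_iff, mem_coe, mem_filter, mem_product, mem_neg',
      P] at h ⊢
    obtain ⟨hs, ⟨⟨ha, hb, hbs⟩, ha', hb', hbs'⟩, h⟩ := h
    refine ⟨sub_mem_sub ha ha', ⟨⟨ha, ha'⟩, trivial⟩, ⟨⟨hb, hb'⟩, by linarith⟩, ⟨hbs, hbs'⟩,
      by linarith⟩
  · rintro ⟨s, ⟨a, b⟩, a', b'⟩ - ⟨t, ⟨c, d⟩, c', d'⟩ - h
    simp only [Sigma.mk.injEq, heq_eq_eq, Prod.mk.injEq, neg_inj] at h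
    obtain ⟨-, ⟨rfl, rfl⟩, ⟨rfl, rfl⟩, h, -⟩ := h
    obtain rfl : s = t := by linarith
    rfl

lemma sum_card_mul_card_le_sum_dlt_sq (A D : Finset ℝ) :
    ∑ s ∈ A - A, #{a ∈ A | a - s ∈ A} * #{d ∈ D | d + s ∈ D} ≤
      ∑ t ∈ A - D, dlt A D t ^ 2 := by
  let P : ℝ → Finset (ℝ × ℝ) := fun t => {p ∈ A ×ˢ D | p.1 - p.2 = t}
  have hP : ∀ t, dlt A D t ^ 2 = #(P t ×ˢ P t) := fun t => by
    rw [card_product, sq]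
    rfl
  simp only [hP, ← card_product, ← card_sigma]
  refine card_le_card_of_injOn (fun q => ⟨q.2.1 - q.1 - q.2.2,
    ((q.2.1, q.2.2 + q.1), (q.2.1 - q.1, q.2.2))⟩) ?_ ?_
  · rintro ⟨s, a, d⟩ h
    simp only [coe_sigma, Set.mem_sigma_iff, mem_coe, mem_filter, mem_product, P] at h ⊢
    obtain ⟨hs, ⟨ha, has⟩, hd, hds⟩ := h
    exact ⟨sub_mem_sub has hd, ⟨⟨ha, hds⟩, by ring⟩, ⟨has, hd⟩, trivial⟩
  · rintro ⟨s, a, d⟩ - ⟨t, b, e⟩ - h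
    simp only [Sigma.mk.injEq, heq_eq_eq, Prod.mk.injEq] at h
    obtain ⟨-, ⟨rfl, -⟩, h, rfl⟩ := h
    obtain rfl : s = t := by linarith
    rfl

/-- A Katz–Koester type inclusion: `a - b` and its shift by `s` are both differences of `A`. -/
lemma sq_card_mul_card_le (A : Finset ℝ) (s : ℝ) :
    (#A * #{a ∈ A | a - s ∈ A}) ^ 2 ≤
      #{d ∈ A - A | d + s ∈ A - A} * addEnergy A (-{a ∈ A | a - s ∈ A}) := by
  refine le_trans (le_of_eq ?_) (card_sq_le_card_mul_addEnergy _ _ _)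
  refine congrArg (· ^ 2) ?_
  rw [← card_neg {a ∈ A | a - s ∈ A}, ← card_product]
  refine (congrArg card (filter_true_of_mem ?_)).symm
  rintro ⟨a, b⟩ h
  simp only [mem_product, mem_neg', mem_filter] at h ⊢
  obtain ⟨ha, hb, hbs⟩ := h
  refine ⟨?_, ?_⟩
  · simpa using sub_mem_sub ha hb
  · convert sub_mem_sub ha hbs using 1
    ring

lemma sq_mul_sum_cube_le {ι : Type*} (I : Finset ι) {r u e : ι → ℝ} {n : ℝ}
    (hr : ∀ i, 0 ≤ r i) (hu : ∀ i, 0 ≤ u i) (he : ∀ i, 0 ≤ e i)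
    (h : ∀ i, (n * r i) ^ 2 ≤ u i * e i) :
    n ^ 2 * (∑ i ∈ I, r i) ^ 3 ≤ #I * (∑ i ∈ I, e i) * ∑ i ∈ I, r i * u i := by
  have h1 : (∑ i ∈ I, n * (√(r i) * r i)) ^ 2 ≤ (∑ i ∈ I, r i * u i) * ∑ i ∈ I, e i := by
    refine sum_sq_le_sum_mul_sum_of_sq_le_mul _ (fun i _ => mul_nonneg (hr i) (hu i))
      (fun i _ => he i) fun i _ => ?_
    calc (n * (√(r i) * r i)) ^ 2 = √(r i) ^ 2 * (n * r i) ^ 2 := by ring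
      _ ≤ r i * (u i * e i) := by
        rw [Real.sq_sqrt (hr i)]
        exact mul_le_mul_of_nonneg_left (h i) (hr i)
      _ = r i * u i * e i := by ring
  have h2 : (∑ i ∈ I, r i) ^ 2 ≤ (∑ i ∈ I, √(r i) * r i) * ∑ i ∈ I, √(r i) := by
    refine sum_sq_le_sum_mul_sum_of_sq_le_mul _
      (fun i _ => mul_nonneg (Real.sqrt_nonneg _) (hr i)) (fun i _ => Real.sqrt_nonneg _)
      fun i _ => le_of_eq ?_
    linear_combination -(r i) * Real.sq_sqrt (hr i)
  have h3 : (∑ i ∈ I, √(r i)) ^ 2 ≤ #I * ∑ i ∈ I, r i :=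
    sq_sum_le_card_mul_sum_sq.trans_eq (by simp only [Real.sq_sqrt (hr _)])
  rw [← mul_sum] at h1
  have hR0 : 0 ≤ ∑ i ∈ I, r i := sum_nonneg fun i _ => hr i
  have hE0 : 0 ≤ ∑ i ∈ I, e i := sum_nonneg fun i _ => he i
  have hU0 : 0 ≤ ∑ i ∈ I, r i * u i := sum_nonneg fun i _ => mul_nonneg (hr i) (hu i)
  generalize ∑ i ∈ I, r i = R at *
  generalize ∑ i ∈ I, √(r i) * r i = W at *
  generalize ∑ i ∈ I, √(r i) = P at *
  generalize ∑ i ∈ I, e i = E at *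
  generalize ∑ i ∈ I, r i * u i = U at *
  rcases hR0.eq_or_lt with rfl | hR
  · simpa using by positivity
  have h4 : R ^ 3 ≤ W ^ 2 * #I := by
    refine le_of_mul_le_mul_right ?_ hR
    calc R ^ 3 * R = (R ^ 2) ^ 2 := by ring
      _ ≤ (W * P) ^ 2 := by gcongr
      _ = W ^ 2 * P ^ 2 := by ring
      _ ≤ W ^ 2 * (#I * R) := by gcongr
      _ = W ^ 2 * #I * R := by ring
  calc n ^ 2 * R ^ 3 ≤ n ^ 2 * (W ^ 2 * #I) := by gcongr
    _ = #I * (n * W) ^ 2 := by ring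
    _ ≤ #I * (U * E) := by gcongr
    _ = #I * E * U := by ring

lemma card_pow_eight_le (A : Finset ℝ) :
    (#A : ℝ) ^ 8 ≤ #(A - A) * E3 A * ∑ t ∈ A - (A - A), (dlt A (A - A) t : ℝ) ^ 2 := by
  have hR : (#A : ℝ) * #A ≤ ∑ s ∈ A - A, (#{a ∈ A | a - s ∈ A} : ℝ) := by
    exact_mod_cast (sum_dlt A A).ge.trans (sum_le_sum fun s _ => dlt_le_card_left A A s)
  have he : ∑ s ∈ A - A, (addEnergy A (-{a ∈ A | a - s ∈ A}) : ℝ) ≤ E3 A := by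
    unfold E3
    exact_mod_cast sum_addEnergy_le_sum_dlt_cube A
  have hu : ∑ s ∈ A - A, (#{a ∈ A | a - s ∈ A} : ℝ) * #{d ∈ A - A | d + s ∈ A - A} ≤
      ∑ t ∈ A - (A - A), (dlt A (A - A) t : ℝ) ^ 2 := by
    exact_mod_cast sum_card_mul_card_le_sum_dlt_sq A (A - A)
  have h := sq_mul_sum_cube_le (A - A) (r := fun s => (#{a ∈ A | a - s ∈ A} : ℝ))
    (u := fun s => (#{d ∈ A - A | d + s ∈ A - A} : ℝ))
    (e := fun s => (addEnergy A (-{a ∈ A | a - s ∈ A}) : ℝ)) (n := #A)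
    (fun _ => Nat.cast_nonneg _) (fun _ => Nat.cast_nonneg _) (fun _ => Nat.cast_nonneg _)
    fun s => by exact_mod_cast sq_card_mul_card_le A s
  calc (#A : ℝ) ^ 8 = (#A : ℝ) ^ 2 * (#A * #A) ^ 3 := by ring
    _ ≤ (#A : ℝ) ^ 2 * (∑ s ∈ A - A, (#{a ∈ A | a - s ∈ A} : ℝ)) ^ 3 := by gcongr
    _ ≤ _ := h
    _ ≤ _ := by
      refine mul_le_mul (mul_le_mul_of_nonneg_left he (Nat.cast_nonneg _)) hu
        (sum_nonneg fun _ _ => by positivity) (mul_nonneg (Nat.cast_nonneg _) ?_)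
      exact sum_nonneg fun _ _ => by positivity

lemma card_image_add_pow_mul_card_sub_pow_of_strictMonoOn {f : ℝ → ℝ}
    (hf : StrictConvexOn ℝ Set.univ f) {A C : Finset ℝ} (hmono : StrictMonoOn f A)
    (hA : A.Nonempty) (hC : C.Nonempty) :
    (#A : ℝ) ^ 11 * (#C : ℝ) ^ 3 ≤ 60750000 * ((#(A.image f + C) : ℝ) ^ 6 *
      (#(A - A) : ℝ) ^ 5 * (1 + Real.log #A) ^ 2) := by
  set S := A.image f + C with hSdef
  set D := A - A with hDdef
  have hS : ∀ a ∈ A, ∀ c ∈ C, f a + c ∈ S := fun a ha c hc =>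
    add_mem_add (mem_image_of_mem f ha) hc
  have hAS : #A ≤ #S := by
    rw [← card_image_of_injOn hmono.injOn]
    exact card_le_card_add_right hC
  have hCS : #C ≤ #S := card_le_card_add_left (hA.image f)
  have hn : (0 : ℝ) < #A := by exact_mod_cast hA.card_pos
  have hc : (0 : ℝ) < #C := by exact_mod_cast hC.card_pos
  have hD : (1 : ℝ) ≤ #D := by exact_mod_cast (hA.sub hA).card_pos
  have hASr : (#A : ℝ) ≤ #S := by exact_mod_cast hAS
  have hCSr : (#C : ℝ) ≤ #S := by exact_mod_cast hCS
  have hlog : 0 ≤ Real.log #A := Real.log_natCast_nonneg _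
  have level : ∀ B : Finset ℝ, ∀ τ : ℕ, 1 ≤ τ →
      (#{s ∈ A - B | τ ≤ dlt A B s} : ℝ) * (τ : ℝ) ^ 3 ≤ 75 * #S ^ 2 * #B ^ 2 / #C := by
    intro B τ _
    have h := card_rich_differences_le hf hmono hS hAS hCS (T := {s ∈ A - B | τ ≤ dlt A B s})
      fun s hs => (mem_filter.1 hs).2
    rw [le_div_iff₀ hc, mul_right_comm]
    exact_mod_cast h
  have hE3 : E3 A ≤ 225 * #S ^ 2 * #A ^ 2 / #C * (1 + Real.log #A) :=
    (sum_cube_le (level A) (by positivity) fun s _ => dlt_le_card_right A A s).trans_eq (by ring)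
  have hE2 : (∑ t ∈ A - D, (dlt A D t : ℝ) ^ 2) ^ 2 ≤
      16 * (75 * #S ^ 2 * #D ^ 2 / #C * (#A * #D)) := by
    refine sum_sq_sq_le (level D) (by exact_mod_cast sum_dlt A D) (by positivity) ?_
    rw [le_div_iff₀ hc]
    calc (#A : ℝ) * #D * #C ≤ #S * (#D * #D) * #S := by
          gcongr
          exact le_mul_of_one_le_left (by positivity) hD
      _ ≤ 75 * #S ^ 2 * #D ^ 2 := by nlinarith [sq_nonneg ((#S : ℝ) * #D)]
  have hE3nonneg : 0 ≤ E3 A := sum_nonneg fun s _ => by positivity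
  have key : (#A : ℝ) ^ 16 ≤ 60750000 * (#S ^ 6 * #D ^ 5 * (1 + Real.log #A) ^ 2) * #A ^ 5 /
      #C ^ 3 := by
    calc (#A : ℝ) ^ 16 = (#A ^ 8) ^ 2 := by ring
      _ ≤ (#D * E3 A * ∑ t ∈ A - D, (dlt A D t : ℝ) ^ 2) ^ 2 := by
        gcongr
        exact card_pow_eight_le A
      _ = #D ^ 2 * E3 A ^ 2 * (∑ t ∈ A - D, (dlt A D t : ℝ) ^ 2) ^ 2 := by ring
      _ ≤ #D ^ 2 * (225 * #S ^ 2 * #A ^ 2 / #C * (1 + Real.log #A)) ^ 2 *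
          (16 * (75 * #S ^ 2 * #D ^ 2 / #C * (#A * #D))) := by gcongr
      _ = _ := by
        field_simp
        ring
  rw [le_div_iff₀ (by positivity)] at key
  refine le_of_mul_le_mul_right ?_ (show (0 : ℝ) < #A ^ 5 by positivity)
  linarith

lemma StrictConvexOn.comp_neg_univ {f : ℝ → ℝ} (hf : StrictConvexOn ℝ Set.univ f) :
    StrictConvexOn ℝ Set.univ (fun x => f (-x)) := by
  refine ⟨convex_univ, fun x _ y _ hxy a b ha hb hab => ?_⟩
  have h := hf.2 (x := -x) (y := -y) trivial trivial (by simpa using hxy) ha hb hab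
  convert h using 2
  simp only [smul_eq_mul]
  ring

lemma card_image_add_pow_mul_card_sub_pow_of_strictAntiOn {f : ℝ → ℝ}
    (hf : StrictConvexOn ℝ Set.univ f) {A C : Finset ℝ} (hanti : StrictAntiOn f A)
    (hA : A.Nonempty) (hC : C.Nonempty) :
    (#A : ℝ) ^ 11 * (#C : ℝ) ^ 3 ≤ 60750000 * ((#(A.image f + C) : ℝ) ^ 6 *
      (#(A - A) : ℝ) ^ 5 * (1 + Real.log #A) ^ 2) := by
  have himage : (-A).image (fun x => f (-x)) = A.image f := by
    ext y
    simp only [mem_image, mem_neg']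
    exact ⟨fun ⟨x, hx, h⟩ => ⟨-x, hx, h⟩, fun ⟨x, hx, h⟩ => ⟨-x, by simpa, by simpa⟩⟩
  have hsub : -A - -A = -(A - A) := by
    rw [neg_sub', sub_neg_eq_add]
  have h := card_image_add_pow_mul_card_sub_pow_of_strictMonoOn hf.comp_neg_univ (A := -A)
    (fun x hx y hy hxy => hanti (by simpa using hy) (by simpa using hx) (neg_lt_neg hxy))
    hA.neg hC
  rwa [himage, hsub, card_neg, card_neg] at h

lemma exists_large_monotone_subset {f : ℝ → ℝ} (hf : StrictConvexOn ℝ Set.univ f)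
    {A : Finset ℝ} (hA : 2 ≤ #A) :
    ∃ B ⊆ A, #A ≤ 4 * #B ∧ (StrictMonoOn f B ∨ StrictAntiOn f B) := by
  obtain ⟨m, hm, hmin⟩ := exists_min_image A f (card_pos.1 (by omega))
  have hmono : StrictMonoOn f ({a ∈ A | m < a} : Finset ℝ) := by
    intro a ha b _ hab
    obtain ⟨ha, hma⟩ := mem_filter.1 (mem_coe.1 ha)
    have h := hf.slope_strict_mono_adjacent (x := m) trivial trivial hma hab
    have h0 : 0 ≤ (f a - f m) / (a - m) :=
      div_nonneg (sub_nonneg.2 (hmin a ha)) (sub_nonneg.2 hma.le)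
    linarith [(div_pos_iff_of_pos_right (sub_pos.2 hab)).1 (h0.trans_lt h)]
  have hanti : StrictAntiOn f ({a ∈ A | a < m} : Finset ℝ) := by
    intro a _ b hb hab
    obtain ⟨hb, hbm⟩ := mem_filter.1 (mem_coe.1 hb)
    have h := hf.slope_strict_mono_adjacent (z := m) trivial trivial hab hbm
    have h0 : (f m - f b) / (m - b) ≤ 0 :=
      div_nonpos_of_nonpos_of_nonneg (sub_nonpos.2 (hmin b hb)) (sub_nonneg.2 hbm.le)
    have h1 := h.trans_le h0
    rw [div_lt_iff₀ (sub_pos.2 hab)] at h1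
    linarith
  have hcard : #A ≤ #{a ∈ A | m < a} + #{a ∈ A | a < m} + 1 := by
    rw [← card_singleton m]
    refine le_trans (card_le_card fun a ha => ?_) ((card_union_le _ _).trans
      (Nat.add_le_add_right (card_union_le _ _) _))
    simp only [mem_union, mem_filter, mem_singleton, ha, true_and]
    rcases lt_trichotomy a m with h | h | h <;> simp [h]
  rcases le_total #{a ∈ A | m < a} #{a ∈ A | a < m} with h | h
  · exact ⟨_, filter_subset _ _, by omega, Or.inr hanti⟩
  · exact ⟨_, filter_subset _ _, by omega, Or.inl hmono⟩

theorem stmt11 : ∃ K : ℝ, 0 < K ∧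
    ∀ f : ℝ → ℝ, Continuous f → StrictConvexOn ℝ Set.univ f →
    ∀ A C : Finset ℝ, (A.card : ℝ) / 2 ≤ (C.card : ℝ) → (C.card : ℝ) ≤ 2 * (A.card : ℝ) →
    2 ≤ A.card →
    ((A.image f + C).card : ℝ) ^ 6 * ((A - A).card : ℝ) ^ 5 ≥
      K * (A.card : ℝ) ^ 14 / (Real.log A.card) ^ 2 := by
  refine ⟨1 / (4 ^ 11 * 2 ^ 3 * 9 * 60750000), by positivity, fun f _ hf A C hAC _ hA => ?_⟩
  obtain ⟨B, hBA, hAB, hB⟩ := exists_large_monotone_subset hf hA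
  have hA2 : (2 : ℝ) ≤ #A := by exact_mod_cast hA
  have hBne : B.Nonempty := card_pos.1 (by omega)
  have hCne : C.Nonempty := card_pos.1 (by
    have : (0 : ℝ) < #C := by linarith
    exact_mod_cast this)
  have hBpos : (0 : ℝ) < #B := by exact_mod_cast hBne.card_pos
  have hlog : 1 / 2 < Real.log #A := by
    have := Real.log_le_log (by norm_num) hA2
    linarith [Real.log_two_gt_d9]
  have hlogB : Real.log #B ≤ Real.log #A :=
    Real.log_le_log hBpos (by exact_mod_cast card_le_card hBA)
  have hlogB0 : 0 ≤ Real.log #B := Real.log_natCast_nonneg _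
  have hS : #(B.image f + C) ≤ #(A.image f + C) :=
    card_le_card (add_subset_add_right (image_subset_image hBA))
  have hD : #(B - B) ≤ #(A - A) := card_le_card (sub_subset_sub hBA hBA)
  have hAB' : (#A : ℝ) / 4 ≤ #B := by
    rw [div_le_iff₀ (by norm_num), mul_comm]
    exact_mod_cast hAB
  have key : (#B : ℝ) ^ 11 * (#C : ℝ) ^ 3 ≤ 60750000 * ((#(B.image f + C) : ℝ) ^ 6 *
      (#(B - B) : ℝ) ^ 5 * (1 + Real.log #B) ^ 2) := by
    rcases hB with hB | hB
    · exact card_image_add_pow_mul_card_sub_pow_of_strictMonoOn hf hB hBne hCne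
    · exact card_image_add_pow_mul_card_sub_pow_of_strictAntiOn hf hB hBne hCne
  have final : (#A / 4 : ℝ) ^ 11 * (#A / 2 : ℝ) ^ 3 ≤ 60750000 * ((#(A.image f + C) : ℝ) ^ 6 *
      (#(A - A) : ℝ) ^ 5 * (3 * Real.log #A) ^ 2) :=
    calc (#A / 4 : ℝ) ^ 11 * (#A / 2 : ℝ) ^ 3 ≤ (#B : ℝ) ^ 11 * (#C : ℝ) ^ 3 := by gcongr
      _ ≤ _ := key
      _ ≤ _ := by
        gcongr
        linarith
  rw [ge_iff_le, div_le_iff₀ (by positivity)]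
  linarith
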